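/- If P is an extremal POVM with finite outcome set E on ℂ^d such that the number of outcomes e with P_e ≠ 0 equals d², then P is rank-one and informationally complete: every nonzero element P_e has rank one, and the elements {P_e}_{e∈E} span the full matrix space M_d(ℂ) over ℂ. -/

import Mathlib

/-!
Extremality rules out perturbations: if matrices `D e` satisfy
`-C • P e ≤ D e ≤ C • P e` and `∑ D e = 0`, then `P ± D / K` are POVMs for `K` large, so `D = 0`
(`IsExtremalPOVM.eq_zero_of_bounded`).

Taking `D e = c e • P e` with real `c` shows that the nonzero elements are linearly independent over
`ℝ`, hence over `ℂ` because they are Hermitian; there are `d ^ 2` of them, so they form a basis of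
the matrix space. This is informational completeness.

For the rank, fix `e₀` with `P e₀ ≠ 0` and a vector `v = P e₀ x ≠ 0`. The rank-one matrix `v vᴴ` is
dominated by a multiple of `P e₀` and, being Hermitian, is a real combination `∑ c e • P e`. The
perturbation `D e = [e = e₀] v vᴴ - c e • P e` must vanish, so `v vᴴ = c e₀ • P e₀`, and `P e₀` has
rank one.
-/

open Matrix
open scoped ComplexOrder

/-- A POVM with finite outcome set `E` on `ℂ^d`: a family of positive semidefinite
matrices summing to the identity. -/
def IsPOVM {d : ℕ} {E : Type*} [Fintype E] (P : E → Matrix (Fin d) (Fin d) ℂ) : Prop :=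
  (∀ e, (P e).PosSemidef) ∧ ∑ e, P e = 1

/-- A POVM is extremal if it is an extreme point of the convex set of POVMs
inside the real vector space of families `E → M_d(ℂ)`. -/
def IsExtremalPOVM {d : ℕ} {E : Type*} [Fintype E] (P : E → Matrix (Fin d) (Fin d) ℂ) : Prop :=
  P ∈ Set.extremePoints ℝ {Q : E → Matrix (Fin d) (Fin d) ℂ | IsPOVM Q}

/-- `D` is a two-sided feasible direction at the positive semidefinite matrix `A`: in the Loewner
order, `-C • A ≤ D ≤ C • A` for some real `C ≥ 0`. -/
def LoewnerBounded {d : ℕ} (A D : Matrix (Fin d) (Fin d) ℂ) : Prop :=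
  ∃ C : ℝ, 0 ≤ C ∧ (C • A - D).PosSemidef ∧ (C • A + D).PosSemidef

lemma posSemidef_real_smul {d : ℕ} {A : Matrix (Fin d) (Fin d) ℂ} (hA : A.PosSemidef)
    {r : ℝ} (hr : 0 ≤ r) : (r • A).PosSemidef :=
  hA.smul hr

lemma loewnerBounded_smul {d : ℕ} {A : Matrix (Fin d) (Fin d) ℂ} (hA : A.PosSemidef) (c : ℝ) :
    LoewnerBounded A (c • A) := by
  refine ⟨|c|, abs_nonneg c, ?_, ?_⟩
  · rw [← sub_smul]
    exact posSemidef_real_smul hA (sub_nonneg.2 (le_abs_self c))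
  · rw [← add_smul]
    exact posSemidef_real_smul hA (by linarith [neg_abs_le c])

lemma LoewnerBounded.sub {d : ℕ} {A D D' : Matrix (Fin d) (Fin d) ℂ}
    (h : LoewnerBounded A D) (h' : LoewnerBounded A D') : LoewnerBounded A (D - D') := by
  obtain ⟨C, hC, h1, h2⟩ := h
  obtain ⟨C', hC', h1', h2'⟩ := h'
  refine ⟨C + C', add_nonneg hC hC', ?_, ?_⟩
  · convert h1.add h2' using 1
    module
  · convert h2.add h1' using 1
    module

/-- Matrices of the form `(A x)(A x)ᴴ` are dominated by a multiple of `A`. With `c = xᴴ A x`, this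
is the identity `A - (A x)(A x)ᴴ / c = Rᴴ A R` for `R = 1 - x (A x)ᴴ / c`. -/
lemma loewnerBounded_vecMulVec {d : ℕ} {A : Matrix (Fin d) (Fin d) ℂ} (hA : A.PosSemidef)
    (x : Fin d → ℂ) (hx : A *ᵥ x ≠ 0) :
    LoewnerBounded A (vecMulVec (A *ᵥ x) (star (A *ᵥ x))) := by
  have hne : star x ⬝ᵥ (A *ᵥ x) ≠ 0 := fun h => hx ((hA.dotProduct_mulVec_zero_iff x).1 h)
  have hnn : 0 ≤ star x ⬝ᵥ (A *ᵥ x) := hA.dotProduct_mulVec_nonneg x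
  obtain ⟨c, hc⟩ : ∃ c : ℝ, star x ⬝ᵥ (A *ᵥ x) = (c : ℂ) :=
    ⟨_, Complex.eq_re_of_ofReal_le (r := 0) (by simpa using hnn)⟩
  have hc0 : 0 ≤ c := by rw [hc] at hnn; exact_mod_cast hnn
  have hc1 : (c : ℂ) ≠ 0 := hc ▸ hne
  have hV : (vecMulVec (A *ᵥ x) (star (A *ᵥ x))).PosSemidef := posSemidef_vecMulVec_self_star _
  refine ⟨c, hc0, ?_, (posSemidef_real_smul hA hc0).add hV⟩
  set v := A *ᵥ x with hv
  have hvA : star x ᵥ* A = star v := by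
    rw [hv, star_mulVec, hA.isHermitian.eq]
  have key := hA.conjTranspose_mul_mul_same (1 - (c : ℂ)⁻¹ • vecMulVec x (star v))
  have e : (1 - (c : ℂ)⁻¹ • vecMulVec x (star v))ᴴ * A * (1 - (c : ℂ)⁻¹ • vecMulVec x (star v))
      = A - (c : ℂ)⁻¹ • vecMulVec v (star v) := by
    have h1 : A * vecMulVec x (star v) = vecMulVec v (star v) := by
      rw [mul_vecMulVec]
    have h2 : vecMulVec v (star x) * A = vecMulVec v (star v) := by
      rw [vecMulVec_mul, hvA]
    have h3 : vecMulVec v (star v) * vecMulVec x (star v) = (c : ℂ) • vecMulVec v (star v) := by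
      rw [vecMulVec_mul_vecMulVec, ← hvA, ← dotProduct_mulVec, hc, hvA, vecMulVec_smul]
    simp only [conjTranspose_sub, conjTranspose_one, conjTranspose_smul, conjTranspose_vecMulVec,
      star_star, star_inv₀, Complex.star_def, Complex.conj_ofReal, sub_mul, mul_sub, one_mul,
      mul_one, smul_mul, Matrix.mul_smul, h1, h2, h3, smul_smul, inv_mul_cancel₀ hc1]
    simp
  rw [e] at key
  convert posSemidef_real_smul key hc0 using 1
  rw [smul_sub, ← Complex.coe_smul c ((c : ℂ)⁻¹ • _), smul_smul, mul_inv_cancel₀ hc1, one_smul]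

/-- An extremal POVM admits no nonzero two-sided feasible direction. -/
lemma IsExtremalPOVM.eq_zero_of_bounded {d : ℕ} {E : Type*} [Fintype E]
    {P : E → Matrix (Fin d) (Fin d) ℂ} (hP : IsPOVM P) (hext : IsExtremalPOVM P)
    (D : E → Matrix (Fin d) (Fin d) ℂ) (hD : ∀ e, LoewnerBounded (P e) (D e))
    (hsum : ∑ e, D e = 0) : D = 0 := by
  choose C hC h1 h2 using hD
  -- a single positive constant that works for all outcomes
  set K : ℝ := ∑ e, C e + 1
  have hCK : ∀ e, C e ≤ K := fun e => by
    have := Finset.single_le_sum (f := C) (fun i _ => hC i) (Finset.mem_univ e)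
    simp only [K]; linarith
  have hK : 0 < K := by
    have := Finset.sum_nonneg (s := Finset.univ) (f := C) (fun i _ => hC i)
    simp only [K]; linarith
  have hm : IsPOVM (P - K⁻¹ • D) := by
    refine ⟨fun e => ?_, ?_⟩
    · convert posSemidef_real_smul ((h1 e).add
        (posSemidef_real_smul (hP.1 e) (sub_nonneg.2 (hCK e)))) (inv_nonneg.2 hK.le) using 1
      simp only [Pi.sub_apply, Pi.smul_apply]
      match_scalars <;> field_simp
      ring
    · simp [Finset.sum_sub_distrib, ← Finset.smul_sum, hsum, hP.2]
  have hp : IsPOVM (P + K⁻¹ • D) := by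
    refine ⟨fun e => ?_, ?_⟩
    · convert posSemidef_real_smul ((h2 e).add
        (posSemidef_real_smul (hP.1 e) (sub_nonneg.2 (hCK e)))) (inv_nonneg.2 hK.le) using 1
      simp only [Pi.add_apply, Pi.smul_apply]
      match_scalars <;> field_simp
      ring
    · simp [Finset.sum_add_distrib, ← Finset.smul_sum, hsum, hP.2]
  have h := hext.2 hm hp
    ⟨1 / 2, 1 / 2, by norm_num, by norm_num, by norm_num, by module⟩
  have h0 : K⁻¹ • D = 0 := by simpa using h
  exact (smul_eq_zero.1 h0).resolve_left (inv_ne_zero (ne_of_gt hK))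

/-- A Hermitian combination of Hermitian matrices is also given by the real parts of its
coefficients: average the combination with its conjugate transpose. -/
lemma sum_re_smul_eq {d : ℕ} {E : Type*} [Fintype E]
    {P : E → Matrix (Fin d) (Fin d) ℂ} (hP : ∀ e, (P e).IsHermitian)
    {A : Matrix (Fin d) (Fin d) ℂ} (hA : A.IsHermitian) (c : E → ℂ)
    (h : ∑ e, c e • P e = A) : ∑ e, (c e).re • P e = A := by
  have h' : ∑ e, star (c e) • P e = A := by
    have := congrArg conjTranspose h
    simpa [conjTranspose_sum, conjTranspose_smul, (hP _).eq, hA.eq] using this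
  have h2 : (2 : ℂ) • ∑ e, (c e).re • P e = (2 : ℂ) • A := by
    rw [two_smul ℂ A]
    nth_rw 1 [← h]
    rw [← h', ← Finset.sum_add_distrib, Finset.smul_sum]
    refine Finset.sum_congr rfl fun e _ => ?_
    rw [← add_smul, Complex.star_def, Complex.add_conj, ← Complex.coe_smul, smul_smul]
    push_cast
    rfl
  exact smul_right_injective _ (two_ne_zero) h2

theorem stmt10 {d : ℕ} (hd : 1 ≤ d) {E : Type*} [Fintype E]
    (P : E → Matrix (Fin d) (Fin d) ℂ) (hP : IsPOVM P)
    (hext : IsExtremalPOVM P)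
    (hcard : Fintype.card {e : E // P e ≠ 0} = d ^ 2) :
    (∀ e, P e ≠ 0 → (P e).rank = 1) ∧
      Submodule.span ℂ (Set.range P) = ⊤ := by
  classical
  have hH : ∀ e, (P e).IsHermitian := fun e => (hP.1 e).isHermitian
  have hreal : ∀ c : E → ℂ, ∑ e, c e • P e = 0 → ∀ e, P e ≠ 0 → (c e).re = 0 := by
    intro c hc e he
    have h := IsExtremalPOVM.eq_zero_of_bounded hP hext (fun e => (c e).re • P e)
      (fun e => loewnerBounded_smul (hP.1 e) _) (sum_re_smul_eq hH isHermitian_zero c hc)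
    exact (smul_eq_zero.1 (congrFun h e)).resolve_right he
  have hcomplex : ∀ c : E → ℂ, ∑ e, c e • P e = 0 → ∀ e, P e ≠ 0 → c e = 0 := by
    intro c hc e he
    -- the imaginary part of `c e` is the real part of `-I * c e`
    have h := hreal (fun e => -Complex.I * c e)
      (by simp only [mul_smul, ← Finset.smul_sum, hc, smul_zero]) e he
    exact Complex.ext (hreal c hc e he) (by simpa using h)
  have hli : LinearIndependent ℂ (fun e : {e : E // P e ≠ 0} => P e) := by
    rw [Fintype.linearIndependent_iff]
    intro g hg i
    have h := hcomplex (fun e => if h : P e ≠ 0 then g ⟨e, h⟩ else 0) (by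
      refine Eq.trans (Eq.symm ?_) hg
      refine Finset.sum_of_injOn (fun e : {e : E // P e ≠ 0} => (e : E))
        Subtype.val_injective.injOn (by simp) ?_ ?_
      · intro e _ he
        have : P e = 0 := by
          by_contra h0
          exact he ⟨⟨e, h0⟩, by simp, rfl⟩
        simp [this]
      · intro e _
        simp [e.2]) i i.2
    simpa [i.2] using h
  have hspan : Submodule.span ℂ (Set.range P) = ⊤ := by
    have h := hli.span_eq_top_of_card_eq_finrank' (by
      rw [hcard, Module.finrank_matrix]
      simp [sq])
    rw [eq_top_iff, ← h]
    apply Submodule.span_mono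
    rintro _ ⟨e, rfl⟩
    exact ⟨e, rfl⟩
  refine ⟨fun e₀ he₀ => ?_, hspan⟩
  obtain ⟨x, hx⟩ : ∃ x, P e₀ *ᵥ x ≠ 0 := by
    by_contra! h
    exact he₀ (ext_of_mulVec_single fun i => by rw [h, zero_mulVec])
  set V := vecMulVec (P e₀ *ᵥ x) (star (P e₀ *ᵥ x)) with hV
  have hVH : V.IsHermitian := (posSemidef_vecMulVec_self_star _).isHermitian
  have hV0 : V ≠ 0 := by
    rw [hV, Ne, vecMulVec_eq_zero]
    simp [hx]
  obtain ⟨c, hc⟩ : ∃ c : E → ℂ, ∑ e, c e • P e = V :=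
    (Submodule.mem_span_range_iff_exists_fun ℂ).1 (hspan ▸ Submodule.mem_top)
  have hcr := sum_re_smul_eq hH hVH c hc
  have hD := IsExtremalPOVM.eq_zero_of_bounded hP hext
    (fun e => (if e = e₀ then V else 0) - (c e).re • P e)
    (fun e => by
      refine LoewnerBounded.sub ?_ (loewnerBounded_smul (hP.1 e) _)
      split_ifs with h
      · subst h
        exact loewnerBounded_vecMulVec (hP.1 e) x hx
      · simpa using loewnerBounded_smul (hP.1 e) 0)
    (by rw [Finset.sum_sub_distrib, hcr]; simp)
  have hVP : V = (c e₀).re • P e₀ := by simpa [sub_eq_zero] using congrFun hD e₀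
  have hr : (c e₀).re ≠ 0 := fun h => hV0 (by rw [hVP, h, zero_smul])
  have hPV : P e₀ = vecMulVec ((c e₀).re⁻¹ • (P e₀ *ᵥ x)) (star (P e₀ *ᵥ x)) := by
    rw [smul_vecMulVec, ← hV, hVP, smul_smul, inv_mul_cancel₀ hr, one_smul]
  apply le_antisymm
  · rw [hPV]
    exact rank_vecMulVec_le _ _
  · refine Nat.one_le_iff_ne_zero.2 fun h => hx ?_
    rw [Matrix.rank, Submodule.finrank_eq_zero, LinearMap.range_eq_bot] at h
    exact LinearMap.congr_fun h x
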